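/- Let ((A_t, B_t, C_t))_{t∈ℕ} be a countable family of triples, where for each t ∈ ℕ there are maps b_t, c_t : ℕ → ℕ such that A_{t,λ} is a quantum channel from λ qubits to b_t(λ) + c_t(λ) qubits, B_{t,λ} is a quantum channel from λ + b_t(λ) qubits to λ qubits, and C_{t,λ} is a quantum channel from c_t(λ) + λ qubits to λ qubits, for every λ ∈ ℕ. Then there exist bit strings x_λ, θ_λ ∈ {0,1}^λ for every λ ∈ ℕ such that for every t ∈ ℕ, the function λ ↦ (⟨x_λ| ⊗ ⟨x_λ|) (B_{t,λ} ⊗ C_{t,λ})(|θ_λ⟩⟨θ_λ| ⊗ A_{t,λ}(|x_λ^{θ_λ}⟩⟨x_λ^{θ_λ}|) ⊗ |θ_λ⟩⟨θ_λ|) (|x_λ⟩ ⊗ |x_λ⟩) is negligible, where B_{t,λ} acts on the first copy of |θ_λ⟩⟨θ_λ| together with the first b_t(λ) qubits of A_{t,λ}'s output, and C_{t,λ} acts on the remaining c_t(λ) qubits together with the second copy of |θ_λ⟩⟨θ_λ|. -/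

import Mathlib

open scoped Matrix

/-- A function `f : ℕ → ℝ` is negligible if for every `c`, `f n ≤ n⁻ᶜ` for all
sufficiently large `n`. -/
def Negligible (f : ℕ → ℝ) : Prop :=
  ∀ c : ℕ, ∃ N : ℕ, ∀ n ≥ N, f n ≤ 1 / (n : ℝ) ^ c

/-- The amplitude of the single-qubit state `H^θᵢ |xᵢ⟩` at the basis state `|sᵢ⟩`. -/
noncomputable def qAmp (xi θi si : Bool) : ℂ :=
  if θi then ((1 / Real.sqrt 2 : ℝ) : ℂ) * (if xi && si then -1 else 1)
  else if si = xi then 1 else 0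

/-- The Wiesner state `|x^θ⟩ = H^{θ₁}|x₁⟩ ⊗ ⋯ ⊗ H^{θₙ}|xₙ⟩` as a vector indexed by
computational basis strings. -/
noncomputable def wiesnerVec {n : ℕ} (x θ : Fin n → Bool) : (Fin n → Bool) → ℂ :=
  fun s => ∏ i : Fin n, qAmp (x i) (θ i) (s i)

/-- The density matrix `|x^θ⟩⟨x^θ|` of a Wiesner state. -/
noncomputable def wiesnerDM {n : ℕ} (x θ : Fin n → Bool) :
    Matrix (Fin n → Bool) (Fin n → Bool) ℂ :=
  fun s s' => wiesnerVec x θ s * star (wiesnerVec x θ s')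

/-- The winning probability, in the monogamy-of-entanglement game, of the
adversaries given by Kraus families `KA` (splitting channel, `n → aB + aC` qubits),
`KB` (`n + aB → n` qubits) and `KC` (`aC + n → n` qubits), on the Wiesner state
`|x^θ⟩`: the probability `⟨x,x| (B ⊗ C)(|θ⟩⟨θ| ⊗ A(|x^θ⟩⟨x^θ|) ⊗ |θ⟩⟨θ|) |x,x⟩`
that both `B` and `C`, each given `θ` alongside their share of `A`'s output,
output `x`. -/
noncomputable def moeProb {n aB aC mA mB mC : ℕ}
    (KA : Fin mA → Matrix (Fin (aB + aC) → Bool) (Fin n → Bool) ℂ)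
    (KB : Fin mB → Matrix (Fin n → Bool) (Fin (n + aB) → Bool) ℂ)
    (KC : Fin mC → Matrix (Fin n → Bool) (Fin (aC + n) → Bool) ℂ)
    (x θ : Fin n → Bool) : ℝ :=
  let σ : Matrix (Fin (aB + aC) → Bool) (Fin (aB + aC) → Bool) ℂ :=
    ∑ i, KA i * wiesnerDM x θ * (KA i)ᴴ
  let ρmid : Matrix (Fin (n + aB + (aC + n)) → Bool) (Fin (n + aB + (aC + n)) → Bool) ℂ :=
    fun s s' =>
      (if (fun i : Fin n => s ⟨i.val, by have := i.isLt; omega⟩) = θ then 1 else 0) *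
      (if (fun i : Fin n => s' ⟨i.val, by have := i.isLt; omega⟩) = θ then 1 else 0) *
      σ (fun i : Fin (aB + aC) => s ⟨n + i.val, by have := i.isLt; omega⟩)
        (fun i : Fin (aB + aC) => s' ⟨n + i.val, by have := i.isLt; omega⟩) *
      (if (fun i : Fin n => s ⟨n + aB + aC + i.val, by have := i.isLt; omega⟩) = θ then 1 else 0) *
      (if (fun i : Fin n => s' ⟨n + aB + aC + i.val, by have := i.isLt; omega⟩) = θ then 1 else 0)
  let KBC : Fin mB × Fin mC →
      Matrix (Fin (n + n) → Bool) (Fin (n + aB + (aC + n)) → Bool) ℂ :=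
    fun p r col =>
      KB p.1 (fun i => r ⟨i.val, by have := i.isLt; omega⟩)
        (fun j => col ⟨j.val, by have := j.isLt; omega⟩) *
      KC p.2 (fun i => r ⟨n + i.val, by have := i.isLt; omega⟩)
        (fun j => col ⟨n + aB + j.val, by have := j.isLt; omega⟩)
  let τ : Matrix (Fin (n + n) → Bool) (Fin (n + n) → Bool) ℂ :=
    ∑ p : Fin mB × Fin mC, KBC p * ρmid * (KBC p)ᴴ
  let xx : Fin (n + n) → Bool := fun i =>
    if h : i.val < n then x ⟨i.val, h⟩ else x ⟨i.val - n, by have := i.isLt; omega⟩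
  (τ xx xx).re


section core
variable {H : Type*} [NormedAddCommGroup H] [InnerProductSpace ℝ H]

theorem moe_contr (Q : H →ₗ[ℝ] H) (hs : ∀ a b, inner ℝ (Q a) b = inner ℝ a (Q b))
    (h0 : ∀ a, 0 ≤ inner ℝ a (Q a)) (h1 : ∀ a, inner ℝ a (Q a) ≤ inner ℝ a a) (a : H) :
    inner ℝ (Q a) (Q a) ≤ inner ℝ a a := by
  have e1 := h1 a
  have e2 := h1 (Q a)
  have e3 := h0 (a - Q a)
  rw [map_sub, inner_sub_left, inner_sub_right, inner_sub_right] at e3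
  have e4 := hs a (Q a)
  have e5 := hs a a
  linarith

theorem moe_amgm (T : H →ₗ[ℝ] H) (hs : ∀ a b, inner ℝ (T a) b = inner ℝ a (T b))
    (h0 : ∀ a, 0 ≤ inner ℝ a (T a)) (c d : ℝ) (hc : |c| ≤ d) (a b : H) :
    2 * (c * inner ℝ a (T b)) ≤ d * (inner ℝ a (T a) + inner ℝ b (T b)) := by
  have e1 := h0 (a - b)
  have e2 := h0 (a + b)
  rw [map_sub, inner_sub_left, inner_sub_right, inner_sub_right] at e1
  rw [map_add, inner_add_left, inner_add_right, inner_add_right] at e2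
  have e3 : inner ℝ b (T a) = inner ℝ a (T b) := by rw [← hs, real_inner_comm]
  rw [e3] at e1 e2
  have hz : |inner ℝ a (T b)| * 2 ≤ inner ℝ a (T a) + inner ℝ b (T b) := by
    rcases abs_cases (inner ℝ a (T b)) with h | h <;> linarith
  calc 2 * (c * inner ℝ a (T b)) ≤ 2 * (|c| * |inner ℝ a (T b)|) := by
        rw [← abs_mul]; linarith [le_abs_self (c * inner ℝ a (T b))]
    _ = |c| * (|inner ℝ a (T b)| * 2) := by ring
    _ ≤ d * (inner ℝ a (T a) + inner ℝ b (T b)) := by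
        apply mul_le_mul hc hz (by positivity) (le_trans (abs_nonneg _) hc)

theorem moe_pair {X : Type*} [Fintype X] (P P' Q Q' : X → H →ₗ[ℝ] H)
    (hPs : ∀ x a b, inner ℝ (P x a) b = inner ℝ a (P x b))
    (hP's : ∀ x a b, inner ℝ (P' x a) b = inner ℝ a (P' x b))
    (hQs : ∀ x a b, inner ℝ (Q x a) b = inner ℝ a (Q x b))
    (hQ's : ∀ x a b, inner ℝ (Q' x a) b = inner ℝ a (Q' x b))
    (hP0 : ∀ x a, 0 ≤ inner ℝ a (P x a))
    (hP'0 : ∀ x a, 0 ≤ inner ℝ a (P' x a))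
    (hQ0 : ∀ x a, 0 ≤ inner ℝ a (Q x a))
    (hQ'0 : ∀ x a, 0 ≤ inner ℝ a (Q' x a))
    (hPQ0 : ∀ x y a, 0 ≤ inner ℝ a (P x (Q' y a)))
    (hc1 : ∀ x y a, P x (Q' y a) = Q' y (P x a))
    (hc2 : ∀ x y a, P' x (Q' y a) = Q' y (P' x a))
    (hP1 : ∀ a, ∑ x, P x a = a) (hP'1 : ∀ a, ∑ x, P' x a = a)
    (hQ1 : ∀ a, ∑ x, Q x a = a) (hQ'1 : ∀ a, ∑ x, Q' x a = a)
    (c : X → X → ℝ) (d N : ℝ) (hd : 0 ≤ d) (hc : ∀ x y, |c x y| ≤ d) (U V : X → H)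
    (hU : ∑ x, inner ℝ (U x) (U x) = N) (hV : ∑ x, inner ℝ (V x) (V x) = N) :
    ∑ x, ∑ y, c x y * inner ℝ (P x (Q x (U x))) (P' y (Q' y (V y))) ≤ d * N := by
  have le1 : ∀ (R : X → H →ₗ[ℝ] H), (∀ x a, 0 ≤ inner ℝ a (R x a)) → (∀ a, ∑ x, R x a = a) →
      ∀ x a, inner ℝ a (R x a) ≤ inner ℝ a a := by
    intro R h0 h1 x a
    conv_rhs => rw [← h1 a, h1 a]
    calc inner ℝ a (R x a) ≤ ∑ x, inner ℝ a (R x a) :=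
          Finset.single_le_sum (f := fun x => inner ℝ a (R x a)) (fun i _ => h0 i a) (Finset.mem_univ x)
      _ = inner ℝ a a := by rw [← inner_sum, h1]
  have key : ∀ x y, 2 * (c x y * inner ℝ (P x (Q x (U x))) (P' y (Q' y (V y)))) ≤
      d * (inner ℝ (Q x (U x)) (P x (Q' y (Q x (U x)))) +
        inner ℝ (P' y (V y)) (P x (Q' y (P' y (V y))))) := by
    intro x y
    have := moe_amgm (P x ∘ₗ Q' y) (by intro a b; simp [hPs, hQ's, hc1]) (by intro a; exact hPQ0 x y a)
      (c x y) d (hc x y) (Q x (U x)) (P' y (V y))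
    simp only [LinearMap.comp_apply] at this
    rwa [hPs, hc2]
  have sA : ∀ x, ∑ y, inner ℝ (Q x (U x)) (P x (Q' y (Q x (U x)))) ≤ inner ℝ (U x) (U x) := by
    intro x
    rw [← inner_sum, ← map_sum, hQ'1]
    exact (le1 P hP0 hP1 x _).trans (moe_contr (Q x) (hQs x) (hQ0 x) (le1 Q hQ0 hQ1 x) _)
  have sB : ∀ y, ∑ x, inner ℝ (P' y (V y)) (P x (Q' y (P' y (V y)))) ≤ inner ℝ (V y) (V y) := by
    intro y
    rw [← inner_sum, hP1]
    exact (le1 Q' hQ'0 hQ'1 y _).trans (moe_contr (P' y) (hP's y) (hP'0 y) (le1 P' hP'0 hP'1 y) _)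
  have h2 : 2 * ∑ x, ∑ y, c x y * inner ℝ (P x (Q x (U x))) (P' y (Q' y (V y))) ≤ d * (N + N) := by
    calc _ = ∑ x, ∑ y, 2 * (c x y * inner ℝ (P x (Q x (U x))) (P' y (Q' y (V y)))) := by
          simp only [Finset.mul_sum]
      _ ≤ ∑ x, ∑ y, d * (inner ℝ (Q x (U x)) (P x (Q' y (Q x (U x)))) +
        inner ℝ (P' y (V y)) (P x (Q' y (P' y (V y))))) :=
          Finset.sum_le_sum fun x _ => Finset.sum_le_sum fun y _ => key x y
      _ = d * (∑ x, ∑ y, inner ℝ (Q x (U x)) (P x (Q' y (Q x (U x)))) +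
           ∑ y, ∑ x, inner ℝ (P' y (V y)) (P x (Q' y (P' y (V y))))) := by
          rw [Finset.sum_comm (f := fun y x => inner ℝ (P' y (V y)) (P x (Q' y (P' y (V y)))))]
          simp only [← Finset.mul_sum, Finset.sum_add_distrib]
      _ ≤ d * (N + N) := by
          apply mul_le_mul_of_nonneg_left _ hd
          rw [← hU]
          nth_rw 2 [hU]; rw [← hV]
          exact add_le_add (Finset.sum_le_sum fun x _ => sA x) (Finset.sum_le_sum fun x _ => sB x)
  linarith

theorem moe_core {X Θ S : Type*} [Fintype X] [Fintype Θ] [Fintype S] [DecidableEq S]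
    (P Q : Θ → X → H →ₗ[ℝ] H)
    (hPs : ∀ θ x a b, inner ℝ (P θ x a) b = inner ℝ a (P θ x b))
    (hQs : ∀ θ x a b, inner ℝ (Q θ x a) b = inner ℝ a (Q θ x b))
    (hP0 : ∀ θ x a, 0 ≤ inner ℝ a (P θ x a))
    (hQ0 : ∀ θ x a, 0 ≤ inner ℝ a (Q θ x a))
    (hPQ0 : ∀ θ θ' x y a, 0 ≤ inner ℝ a (P θ x (Q θ' y a)))
    (hc1 : ∀ θ θ' x y a, P θ x (Q θ' y a) = Q θ' y (P θ x a))
    (hP1 : ∀ θ a, ∑ x, P θ x a = a) (hQ1 : ∀ θ a, ∑ x, Q θ x a = a)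
    (W : Θ → X → S → ℝ) (d : Θ → Θ → ℝ)
    (hW : ∀ θ s s', ∑ x, W θ x s * W θ x s' = if s = s' then 1 else 0)
    (hd : ∀ θ θ' x y, |∑ s, W θ x s * W θ' y s| ≤ d θ θ') (hd0 : ∀ θ θ', 0 ≤ d θ θ')
    (u : S → H) (l : ℝ) (hl : 0 < l) (hl2 : ∑ θ, ∑ θ', d θ θ' = l ^ 2) :
    ∑ θ, ∑ x, inner ℝ (∑ s, W θ x s • u s) (P θ x (Q θ x (∑ s, W θ x s • u s)))
      ≤ l * ∑ s, inner ℝ (u s) (u s) := by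
  set U : Θ → X → H := fun θ x => ∑ s, W θ x s • u s with hU
  set N := ∑ s, inner ℝ (u s) (u s) with hN
  set F : Θ → X → H := fun θ x => P θ x (Q θ x (U θ x)) with hF
  have hUN : ∀ θ, ∑ x, inner ℝ (U θ x) (U θ x) = N := by
    intro θ
    simp only [hU, sum_inner, inner_sum, real_inner_smul_left, real_inner_smul_right]
    rw [Finset.sum_comm, hN]
    refine Finset.sum_congr rfl fun s _ => ?_
    rw [Finset.sum_comm]
    calc _ = ∑ s', (∑ x, W θ x s * W θ x s') * inner ℝ (u s) (u s') := by
          refine Finset.sum_congr rfl fun s' _ => ?_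
          rw [Finset.sum_mul]
          refine Finset.sum_congr rfl fun x _ => ?_
          ring_nf
          try rw [real_inner_comm]
      _ = _ := by simp [hW]
  set g : S → H := fun s => ∑ θ, ∑ x, W θ x s • F θ x with hg
  have hS : ∑ θ, ∑ x, inner ℝ (U θ x) (F θ x) = ∑ s, inner ℝ (u s) (g s) := by
    simp only [hg, hU, sum_inner, inner_sum, real_inner_smul_left, real_inner_smul_right]
    symm
    rw [Finset.sum_comm]
    refine Finset.sum_congr rfl fun θ _ => ?_
    rw [Finset.sum_comm]
  have hG : ∑ s, inner ℝ (g s) (g s) ≤ l ^ 2 * N := by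
    calc ∑ s, inner ℝ (g s) (g s) = ∑ θ, ∑ θ', ∑ x, ∑ y,
          (∑ s, W θ x s * W θ' y s) * inner ℝ (F θ x) (F θ' y) := by
          simp only [hg, sum_inner]
          simp only [inner_sum, real_inner_smul_left, real_inner_smul_right]
          rw [Finset.sum_comm]
          refine Finset.sum_congr rfl fun θ _ => ?_
          rw [Finset.sum_comm]
          rw [Finset.sum_comm (s := (Finset.univ : Finset Θ))]
          refine Finset.sum_congr rfl fun x _ => ?_
          rw [Finset.sum_comm]
          refine Finset.sum_congr rfl fun θ' _ => ?_
          rw [Finset.sum_comm]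
          refine Finset.sum_congr rfl fun y _ => ?_
          rw [Finset.sum_mul]
          refine Finset.sum_congr rfl fun s _ => ?_
          ring
      _ ≤ ∑ θ, ∑ θ', d θ θ' * N := by
          refine Finset.sum_le_sum fun θ _ => Finset.sum_le_sum fun θ' _ => ?_
          exact moe_pair (P θ) (P θ') (Q θ) (Q θ') (hPs _) (hPs _) (hQs _) (hQs _)
            (hP0 _) (hP0 _) (hQ0 _) (hQ0 _) (hPQ0 _ _) (hc1 _ _) (hc1 _ _) (hP1 _) (hP1 _)
            (hQ1 _) (hQ1 _) _ _ _ (hd0 _ _) (hd θ θ') (U θ) (U θ') (hUN _) (hUN _)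
      _ = l ^ 2 * N := by simp only [← Finset.sum_mul, hl2]
  rw [hS]
  have h3 : ∀ s, 2 * (l * inner ℝ (u s) (g s)) ≤ l ^ 2 * inner ℝ (u s) (u s) + inner ℝ (g s) (g s) := by
    intro s
    have := real_inner_self_nonneg (x := l • u s - g s)
    rw [inner_sub_left, inner_sub_right, inner_sub_right] at this
    simp only [real_inner_smul_left, real_inner_smul_right] at this
    rw [real_inner_comm (u s) (g s)] at this
    nlinarith
  have h4 := Finset.sum_le_sum fun s (_ : s ∈ Finset.univ) => h3 s
  rw [Finset.sum_add_distrib] at h4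
  simp only [← Finset.mul_sum] at h4
  have h5 : l * ∑ s, inner ℝ (u s) (g s) ≤ l * (l * N) := by nlinarith
  exact le_of_mul_le_mul_left h5 hl
end core

open scoped Kronecker ComplexOrder

theorem moe_real_inner {κ : Type*} [Fintype κ] (a b : EuclideanSpace ℂ κ) :
    inner ℝ a b = RCLike.re (inner ℂ a b) := by
  rw [PiLp.inner_apply, PiLp.inner_apply, map_sum]
  refine Finset.sum_congr rfl fun i _ => ?_
  rw [real_inner_eq_re_inner ℂ]

theorem moe_inner_op {κ : Type*} [Fintype κ] [DecidableEq κ] (M : Matrix κ κ ℂ)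
    (a b : EuclideanSpace ℂ κ) :
    inner ℝ a (((Matrix.toEuclideanLin M).restrictScalars ℝ) b)
      = (star (a.ofLp) ⬝ᵥ (M *ᵥ b.ofLp)).re := by
  rw [moe_real_inner, EuclideanSpace.inner_eq_star_dotProduct, dotProduct_comm]
  simp

theorem moe_op_comp {κ : Type*} [Fintype κ] [DecidableEq κ] (M M' : Matrix κ κ ℂ)
    (a : EuclideanSpace ℂ κ) :
    ((Matrix.toEuclideanLin M).restrictScalars ℝ) (((Matrix.toEuclideanLin M').restrictScalars ℝ) a)
     = ((Matrix.toEuclideanLin (M * M')).restrictScalars ℝ) a := by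
  simp

theorem moe_op_sum {κ X : Type*} [Fintype κ] [DecidableEq κ] [Fintype X] (M : X → Matrix κ κ ℂ)
    (h : ∑ x, M x = 1) (a : EuclideanSpace ℂ κ) :
    ∑ x, ((Matrix.toEuclideanLin (M x)).restrictScalars ℝ) a = a := by
  have : ∑ x, ((Matrix.toEuclideanLin (M x)) a) = a := by
    rw [← LinearMap.sum_apply, ← map_sum, h]
    simp
  simpa using this

theorem moe_op_symm {κ : Type*} [Fintype κ] [DecidableEq κ] (M : Matrix κ κ ℂ) (h : M.IsHermitian)
    (a b : EuclideanSpace ℂ κ) :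
    inner ℝ (((Matrix.toEuclideanLin M).restrictScalars ℝ) a) b =
    inner ℝ a (((Matrix.toEuclideanLin M).restrictScalars ℝ) b) := by
  rw [moe_real_inner, moe_real_inner]
  have := (Matrix.isSymmetric_toEuclideanLin_iff.2 h) a b
  simpa using congrArg RCLike.re this

theorem moe_op_nonneg {κ : Type*} [Fintype κ] [DecidableEq κ] (M : Matrix κ κ ℂ) (h : M.PosSemidef)
    (a : EuclideanSpace ℂ κ) :
    0 ≤ inner ℝ a (((Matrix.toEuclideanLin M).restrictScalars ℝ) a) := by
  rw [moe_inner_op]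
  exact h.re_dotProduct_nonneg _

theorem moe_matrix {B C X Θ S : Type*} [Fintype B] [Fintype C] [Fintype X] [Fintype Θ] [Fintype S]
    [DecidableEq S] [DecidableEq B] [DecidableEq C]
    (P : Θ → X → Matrix B B ℂ) (Q : Θ → X → Matrix C C ℂ)
    (hP0 : ∀ θ x, (P θ x).PosSemidef) (hQ0 : ∀ θ x, (Q θ x).PosSemidef)
    (hP1 : ∀ θ, ∑ x, P θ x = 1) (hQ1 : ∀ θ, ∑ x, Q θ x = 1)
    (W : Θ → X → S → ℝ) (d : Θ → Θ → ℝ)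
    (hW : ∀ θ s s', ∑ x, W θ x s * W θ x s' = if s = s' then 1 else 0)
    (hd : ∀ θ θ' x y, |∑ s, W θ x s * W θ' y s| ≤ d θ θ') (hd0 : ∀ θ θ', 0 ≤ d θ θ')
    (u : S → B × C → ℂ) (l : ℝ) (hl : 0 < l) (hl2 : ∑ θ, ∑ θ', d θ θ' = l ^ 2) :
    ∑ θ, ∑ x, (star (fun k => ∑ s, (W θ x s : ℂ) * u s k) ⬝ᵥ
        ((P θ x ⊗ₖ Q θ x) *ᵥ (fun k => ∑ s, (W θ x s : ℂ) * u s k))).re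
      ≤ l * ∑ s, ∑ k, Complex.normSq (u s k) := by
  have hmul : ∀ θ θ' x y, (P θ x ⊗ₖ (1 : Matrix C C ℂ)) * ((1 : Matrix B B ℂ) ⊗ₖ Q θ' y)
      = P θ x ⊗ₖ Q θ' y := by
    intro θ θ' x y; rw [← Matrix.mul_kronecker_mul]; simp
  have hmul' : ∀ θ θ' x y, ((1 : Matrix B B ℂ) ⊗ₖ Q θ' y) * (P θ x ⊗ₖ (1 : Matrix C C ℂ)) 
      = P θ x ⊗ₖ Q θ' y := by
    intro θ θ' x y; rw [← Matrix.mul_kronecker_mul]; simp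
  have pP : ∀ θ x, (P θ x ⊗ₖ (1 : Matrix C C ℂ)).PosSemidef := fun θ x =>
    (hP0 θ x).kronecker Matrix.PosSemidef.one
  have pQ : ∀ θ x, ((1 : Matrix B B ℂ) ⊗ₖ Q θ x).PosSemidef := fun θ x =>
    Matrix.PosSemidef.one.kronecker (hQ0 θ x)
  have := moe_core (H := EuclideanSpace ℂ (B × C))
    (fun θ x => (Matrix.toEuclideanLin (P θ x ⊗ₖ (1 : Matrix C C ℂ))).restrictScalars ℝ)
    (fun θ x => (Matrix.toEuclideanLin ((1 : Matrix B B ℂ) ⊗ₖ Q θ x)).restrictScalars ℝ)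
    (fun θ x => moe_op_symm _ (pP θ x).1) (fun θ x => moe_op_symm _ (pQ θ x).1)
    (fun θ x => moe_op_nonneg _ (pP θ x)) (fun θ x => moe_op_nonneg _ (pQ θ x))
    (fun θ θ' x y a => by
      rw [moe_op_comp, hmul]; exact moe_op_nonneg _ ((hP0 _ _).kronecker (hQ0 _ _)) a)
    (fun θ θ' x y a => by rw [moe_op_comp, moe_op_comp, hmul, hmul'])
    (fun θ => moe_op_sum _ (by
      ext i j
      have := congrFun (congrFun (hP1 θ) i.1) j.1
      simp only [Matrix.sum_apply] at this
      simp only [Matrix.sum_apply, Matrix.kroneckerMap_apply, ← Finset.sum_mul, this,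
        Matrix.one_apply, Prod.ext_iff]
      split_ifs <;> simp_all))
    (fun θ => moe_op_sum _ (by
      ext i j
      have := congrFun (congrFun (hQ1 θ) i.2) j.2
      simp only [Matrix.sum_apply] at this
      simp only [Matrix.sum_apply, Matrix.kroneckerMap_apply, ← Finset.mul_sum, this,
        Matrix.one_apply, Prod.ext_iff]
      split_ifs <;> simp_all))
    W d hW hd hd0 (fun s => WithLp.toLp 2 (u s)) l hl hl2
  have hUe : ∀ θ x, (∑ s, W θ x s • (WithLp.toLp 2 (u s) : EuclideanSpace ℂ (B × C)))
      = WithLp.toLp 2 (fun k => ∑ s, (W θ x s : ℂ) * u s k) := by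
    intro θ x; ext k; simp
  have hn : ∀ s, inner ℝ (WithLp.toLp 2 (u s) : EuclideanSpace ℂ (B × C)) (WithLp.toLp 2 (u s))
      = ∑ k, Complex.normSq (u s k) := by
    intro s
    rw [moe_real_inner, EuclideanSpace.inner_eq_star_dotProduct]
    simp [dotProduct, Complex.mul_conj, Complex.normSq_apply]
  simp only [hUe, hn, moe_op_comp, hmul, moe_inner_op] at this
  exact this

noncomputable def rAmp (xi θi si : Bool) : ℝ :=
  if θi then (1 / Real.sqrt 2 : ℝ) * (if xi && si then -1 else 1)
  else if si = xi then 1 else 0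

noncomputable def rW {n : ℕ} (θ x : Fin n → Bool) (s : Fin n → Bool) : ℝ :=
  ∏ i, rAmp (x i) (θ i) (s i)

noncomputable def dAmp (a b : Bool) : ℝ := if a = b then 1 else 1 / Real.sqrt 2

theorem wiesner_eq {n : ℕ} (x θ s : Fin n → Bool) : wiesnerVec x θ s = (rW θ x s : ℂ) := by
  simp only [wiesnerVec, rW, Complex.ofReal_prod]
  refine Finset.prod_congr rfl fun i _ => ?_
  unfold qAmp rAmp
  split_ifs <;> simp

theorem sum_prod_bool {n : ℕ} (f : Fin n → Bool → ℝ) :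
    ∑ s : Fin n → Bool, ∏ i, f i (s i) = ∏ i, ∑ b, f i b := by
  rw [Finset.prod_univ_sum, Fintype.piFinset_univ]

theorem rsq : (1 / Real.sqrt 2) * (1 / Real.sqrt 2) = 1 / 2 := by
  rw [div_mul_div_comm, Real.mul_self_sqrt (by norm_num)]; norm_num

theorem rAmp_complete (θ s s' : Bool) :
    ∑ x, rAmp x θ s * rAmp x θ s' = if s = s' then 1 else 0 := by
  have := rsq
  cases θ <;> cases s <;> cases s' <;> simp [rAmp] <;> norm_num at this ⊢ <;> linarith

theorem rAmp_overlap (θ θ' x y : Bool) :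
    |∑ s, rAmp x θ s * rAmp y θ' s| ≤ dAmp θ θ' := by
  have := rsq
  have h0 : 0 ≤ 1 / Real.sqrt 2 := by positivity
  cases θ <;> cases θ' <;> cases x <;> cases y <;>
    rw [abs_le] <;> simp [rAmp, dAmp] <;> norm_num at this h0 ⊢ <;>
    first
    | done
    | linarith
    | (constructor <;> linarith)

theorem rW_complete {n : ℕ} (θ s s' : Fin n → Bool) :
    ∑ x, rW θ x s * rW θ x s' = if s = s' then 1 else 0 := by
  simp only [rW, ← Finset.prod_mul_distrib]
  rw [sum_prod_bool (fun i b => rAmp b (θ i) (s i) * rAmp b (θ i) (s' i))]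
  simp only [rAmp_complete]
  rw [Finset.prod_ite_zero]
  simp [funext_iff]

theorem rW_overlap {n : ℕ} (θ θ' x y : Fin n → Bool) :
    |∑ s, rW θ x s * rW θ' y s| ≤ ∏ i, dAmp (θ i) (θ' i) := by
  simp only [rW, ← Finset.prod_mul_distrib]
  rw [sum_prod_bool (fun i b => rAmp (x i) (θ i) b * rAmp (y i) (θ' i) b), Finset.abs_prod]
  exact Finset.prod_le_prod (fun _ _ => abs_nonneg _) fun i _ => rAmp_overlap _ _ _ _

theorem dAmp_sum {n : ℕ} :
    ∑ θ : Fin n → Bool, ∑ θ' : Fin n → Bool, ∏ i, dAmp (θ i) (θ' i)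
      = (Real.sqrt (2 + Real.sqrt 2) ^ n) ^ 2 := by
  have h : ∀ a, ∑ b, dAmp a b = 1 + 1 / Real.sqrt 2 := by
    intro a; cases a <;> simp [dAmp]; ring
  have : ∀ θ : Fin n → Bool, ∑ θ' : Fin n → Bool, ∏ i, dAmp (θ i) (θ' i) =
      (1 + 1 / Real.sqrt 2) ^ n := by
    intro θ
    rw [sum_prod_bool (fun i b => dAmp (θ i) b)]
    simp only [h]; simp
  simp only [this]
  rw [← pow_mul, mul_comm n 2, pow_mul, Real.sq_sqrt (by positivity)]
  simp
  rw [← mul_pow]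
  congr 1
  have h2 : Real.sqrt 2 * Real.sqrt 2 = 2 := Real.mul_self_sqrt (by norm_num)
  have : Real.sqrt 2 ≠ 0 := by positivity
  field_simp
  linarith

/-- Kraus row operator of the effect `x` given `θ`, from a family of rows. -/
noncomputable def effect {B : Type*} {m : ℕ} (r : Fin m → B → ℂ) : Matrix B B ℂ :=
  ∑ p, Matrix.vecMulVec (star (r p)) (r p)

theorem effect_psd {B : Type*} [Fintype B] {m : ℕ} (r : Fin m → B → ℂ) :
    (effect r).PosSemidef :=
  Matrix.posSemidef_sum _ fun p _ => Matrix.posSemidef_vecMulVec_star_self (r p)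

theorem effect_sum {B D X : Type*} [DecidableEq B] [DecidableEq D] [Fintype D] [Fintype X] {m : ℕ}
    (K : Fin m → Matrix X D ℂ) (hK : ∑ i, (K i)ᴴ * K i = 1) (e : B → D)
    (he : Function.Injective e) :
    ∑ x, effect (fun p b => K p x (e b)) = 1 := by
  ext b b'
  have := congrFun (congrFun hK (e b)) (e b')
  simp only [Matrix.sum_apply, Matrix.mul_apply, Matrix.conjTranspose_apply] at this
  simp only [Matrix.sum_apply, effect, Matrix.vecMulVec_apply, Pi.star_apply]
  rw [Finset.sum_comm, this, Matrix.one_apply, Matrix.one_apply]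
  simp [he.eq_iff]

theorem effect_form {B C : Type*} [Fintype B] [Fintype C] {m m' : ℕ} (r : Fin m → B → ℂ)
    (t : Fin m' → C → ℂ) (v : B × C → ℂ) :
    (star v ⬝ᵥ ((effect r ⊗ₖ effect t) *ᵥ v)).re =
      ∑ p : Fin m × Fin m', Complex.normSq (∑ k, r p.1 k.1 * t p.2 k.2 * v k) := by
  have : star v ⬝ᵥ ((effect r ⊗ₖ effect t) *ᵥ v) =
      ∑ p : Fin m × Fin m', ((Complex.normSq (∑ k, r p.1 k.1 * t p.2 k.2 * v k) : ℝ) : ℂ) := by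
    simp only [← Complex.mul_conj, map_sum, dotProduct, Matrix.mulVec,
      effect, Matrix.kroneckerMap_apply, Matrix.sum_apply, Matrix.vecMulVec_apply,
      ← Finset.sum_product', Finset.univ_product_univ, Finset.mul_sum, Finset.sum_mul]
    refine Fintype.sum_equiv
      ⟨fun a => ((a.2.2.2, a.2.2.1), (a.1, a.2.1)), fun a => (a.2.1, (a.2.2, (a.1.2, a.1.1))),
        fun _ => rfl, fun _ => rfl⟩ _ _ fun a => ?_
    simp
    ring
  rw [this, Complex.re_sum]
  simp

theorem moe_sandwich {D E I : Type*} [Fintype D] [Fintype I] (K : Matrix E D ℂ) (v : I → D → ℂ)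
    (ρ : Matrix D D ℂ) (hρ : ∀ s s', ρ s s' = ∑ i, v i s * star (v i s')) (e : E) :
    (K * ρ * Kᴴ) e e = ((∑ i, Complex.normSq (∑ s, K e s * v i s) : ℝ) : ℂ) := by
  simp only [Matrix.mul_apply, hρ, Matrix.conjTranspose_apply, Complex.ofReal_sum,
    ← Complex.mul_conj, map_sum, Finset.sum_mul_sum]
  simp only [Finset.mul_sum, Finset.sum_mul]
  rw [Finset.sum_comm]
  rw [Finset.sum_comm (s := (Finset.univ : Finset I))]
  refine Finset.sum_congr rfl fun s _ => ?_
  rw [Finset.sum_comm]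
  refine Finset.sum_congr rfl fun i _ => ?_
  refine Finset.sum_congr rfl fun s' _ => ?_
  simp
  ring

theorem moeProb_eq {n aB aC mA mB mC : ℕ}
    (KA : Fin mA → Matrix (Fin (aB + aC) → Bool) (Fin n → Bool) ℂ)
    (KB : Fin mB → Matrix (Fin n → Bool) (Fin (n + aB) → Bool) ℂ)
    (KC : Fin mC → Matrix (Fin n → Bool) (Fin (aC + n) → Bool) ℂ)
    (x θ : Fin n → Bool) :
    moeProb KA KB KC x θ = ∑ p : Fin mB × Fin mC, ∑ i, Complex.normSq
      (∑ k : (Fin aB → Bool) × (Fin aC → Bool),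
        KB p.1 x (Fin.append θ k.1) * KC p.2 x (Fin.append k.2 θ) *
        ∑ s, (rW θ x s : ℂ) * KA i (Fin.append k.1 k.2) s) := by
  unfold moeProb
  extract_lets σ ρ KBC τ xx
  let v : Fin mA → (Fin (n + aB + (aC + n)) → Bool) → ℂ := fun i s =>
      (if (fun i : Fin n => s ⟨i.val, by have := i.isLt; omega⟩) = θ then 1 else 0) *
      (if (fun i : Fin n => s ⟨n + aB + aC + i.val, by have := i.isLt; omega⟩) = θ then 1 else 0) *
      ∑ s', (rW θ x s' : ℂ) *
        KA i (fun i : Fin (aB + aC) => s ⟨n + i.val, by have := i.isLt; omega⟩) s'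
  have hσ : ∀ k k', σ k k' = ∑ i, (∑ s', (rW θ x s' : ℂ) * KA i k s') *
      star (∑ s', (rW θ x s' : ℂ) * KA i k' s') := by
    intro k k'
    simp only [σ, Matrix.sum_apply]
    refine Finset.sum_congr rfl fun i _ => ?_
    simp only [Matrix.mul_apply, wiesnerDM, wiesner_eq, Matrix.conjTranspose_apply, star_sum,
      Finset.sum_mul_sum, star_mul']
    simp only [Finset.sum_mul]
    rw [Finset.sum_comm]
    refine Finset.sum_congr rfl fun s _ => Finset.sum_congr rfl fun s' _ => ?_
    ring
  have hρ : ∀ s s', ρ s s' = ∑ i, v i s * star (v i s') := by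
    intro s s'
    simp only [ρ, hσ, v, star_mul']
    rw [Finset.mul_sum, Finset.sum_mul, Finset.sum_mul]
    refine Finset.sum_congr rfl fun i _ => ?_
    have hst : ∀ (q : Prop) [Decidable q], star (if q then (1:ℂ) else 0) = if q then 1 else 0 := by
      intro q _; split_ifs <;> simp
    simp only [hst]
    ring
  have h1 : τ xx xx = ((∑ p, ∑ i, Complex.normSq (∑ s, KBC p xx s * v i s) : ℝ) : ℂ) := by
    simp only [τ, Matrix.sum_apply]
    rw [Complex.ofReal_sum]
    exact Finset.sum_congr rfl fun p _ => moe_sandwich (KBC p) v ρ hρ xx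
  rw [h1, Complex.ofReal_re]
  refine Finset.sum_congr rfl fun p _ => Finset.sum_congr rfl fun i _ => ?_
  congr 1
  symm
  have hx1 : (fun i : Fin n => xx ⟨i.val, by have := i.isLt; omega⟩) = x := by
    funext i; simp [xx]
  have hx2 : (fun i : Fin n => xx ⟨n + i.val, by have := i.isLt; omega⟩) = x := by
    funext i; simp [xx]
  have f1 : ∀ (a : Fin n → Bool) (k1 : Fin aB → Bool) (k2 : Fin aC → Bool) (b : Fin n → Bool),
      (fun i : Fin n => Fin.append (Fin.append a k1) (Fin.append k2 b)
        ⟨i.val, by have := i.isLt; omega⟩) = a := by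
    intro a k1 k2 b; funext i
    have := Fin.append_left (Fin.append a k1) (Fin.append k2 b) (Fin.castAdd aB i)
    exact this.trans (Fin.append_left _ _ _)
  have f2 : ∀ (a : Fin n → Bool) (k1 : Fin aB → Bool) (k2 : Fin aC → Bool) (b : Fin n → Bool),
      (fun i : Fin n => Fin.append (Fin.append a k1) (Fin.append k2 b)
        ⟨n + aB + aC + i.val, by have := i.isLt; omega⟩) = b := by
    intro a k1 k2 b; funext i
    have := Fin.append_right (Fin.append a k1) (Fin.append k2 b) (Fin.natAdd aC i)
    rw [← this.trans (Fin.append_right _ _ _)]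
    congr 1
    ext; simp; omega
  have f3 : ∀ (a : Fin n → Bool) (k1 : Fin aB → Bool) (k2 : Fin aC → Bool) (b : Fin n → Bool),
      (fun i : Fin (aB + aC) => Fin.append (Fin.append a k1) (Fin.append k2 b)
        ⟨n + i.val, by have := i.isLt; omega⟩) = Fin.append k1 k2 := by
    intro a k1 k2 b; funext i
    refine Fin.addCases (fun j => ?_) (fun j => ?_) i
    · have := Fin.append_left (Fin.append a k1) (Fin.append k2 b) (Fin.natAdd n j)
      rw [Fin.append_right] at this
      rw [Fin.append_left, ← this]
      congr 1
    · have := Fin.append_right (Fin.append a k1) (Fin.append k2 b) (Fin.castAdd n j)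
      rw [Fin.append_left] at this
      rw [Fin.append_right, ← this]
      congr 1
      ext; simp; omega
  have f4 : ∀ (a : Fin (n + aB) → Bool) (b : Fin (aC + n) → Bool),
      (fun i : Fin (n + aB) => Fin.append a b ⟨i.val, by have := i.isLt; omega⟩) = a := by
    intro a b; funext i
    exact Fin.append_left a b i
  have f5 : ∀ (a : Fin (n + aB) → Bool) (b : Fin (aC + n) → Bool),
      (fun i : Fin (aC + n) => Fin.append a b ⟨n + aB + i.val, by have := i.isLt; omega⟩) = b := by
    intro a b; funext i
    exact Fin.append_right a b i
  refine Fintype.sum_of_injective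
    (fun k : (Fin aB → Bool) × (Fin aC → Bool) =>
      Fin.append (Fin.append θ k.1) (Fin.append k.2 θ)) ?_ _ _ ?_ ?_
  · intro k k' h
    have h' : Fin.append k.1 k.2 = Fin.append k'.1 k'.2 := by
      rw [← f3 θ k.1 k.2 θ, ← f3 θ k'.1 k'.2 θ]
      simp only at h
      rw [h]
    ext i
    · have := congrFun h' (Fin.castAdd aC i)
      simpa using this
    · have := congrFun h' (Fin.natAdd aB i)
      simpa using this
  · intro s hs
    simp only [v]
    split_ifs with c1 c2
    · exfalso
      apply hs
      refine ⟨(fun i => s ⟨n + i.val, by have := i.isLt; omega⟩,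
        fun i => s ⟨n + aB + i.val, by have := i.isLt; omega⟩), ?_⟩
      funext i
      refine Fin.addCases (fun j => ?_) (fun j => ?_) i
      · refine Fin.addCases (fun j => ?_) (fun j => ?_) j
        · simp only [Fin.append_left]
          exact (congrFun c1 j).symm
        · simp only [Fin.append_left, Fin.append_right]
          rfl
      · refine Fin.addCases (fun j => ?_) (fun j => ?_) j
        · simp only [Fin.append_left, Fin.append_right]
          rfl
        · simp only [Fin.append_right]
          rw [← congrFun c2 j]
          congr 1
          ext; simp; omega
    all_goals simp
  · intro k
    simp only [v, KBC, hx1, hx2, f1, f2, f3, f4, f5]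
    simp

theorem moeProb_nonneg {n aB aC mA mB mC : ℕ}
    (KA : Fin mA → Matrix (Fin (aB + aC) → Bool) (Fin n → Bool) ℂ)
    (KB : Fin mB → Matrix (Fin n → Bool) (Fin (n + aB) → Bool) ℂ)
    (KC : Fin mC → Matrix (Fin n → Bool) (Fin (aC + n) → Bool) ℂ)
    (x θ : Fin n → Bool) : 0 ≤ moeProb KA KB KC x θ := by
  rw [moeProb_eq]
  exact Finset.sum_nonneg fun _ _ => Finset.sum_nonneg fun _ _ => Complex.normSq_nonneg _

theorem moeProb_sum {n aB aC mA mB mC : ℕ}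
    (KA : Fin mA → Matrix (Fin (aB + aC) → Bool) (Fin n → Bool) ℂ)
    (KB : Fin mB → Matrix (Fin n → Bool) (Fin (n + aB) → Bool) ℂ)
    (KC : Fin mC → Matrix (Fin n → Bool) (Fin (aC + n) → Bool) ℂ)
    (hKA : ∑ i, (KA i)ᴴ * KA i = 1)
    (hKB : ∑ i, (KB i)ᴴ * KB i = 1)
    (hKC : ∑ i, (KC i)ᴴ * KC i = 1) :
    ∑ θ : Fin n → Bool, ∑ x : Fin n → Bool, moeProb KA KB KC x θ
      ≤ Real.sqrt (2 + Real.sqrt 2) ^ n * 2 ^ n := by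
  have inj1 : ∀ θ : Fin n → Bool, Function.Injective (fun b : Fin aB → Bool => Fin.append θ b) := by
    intro θ b b' h
    funext i
    simpa using congrFun h (Fin.natAdd n i)
  have inj2 : ∀ θ : Fin n → Bool, Function.Injective (fun b : Fin aC → Bool => Fin.append b θ) := by
    intro θ b b' h
    funext i
    simpa using congrFun h (Fin.castAdd n i)
  have hN : ∑ i, ∑ s, ∑ k : (Fin aB → Bool) × (Fin aC → Bool),
      Complex.normSq (KA i (Fin.append k.1 k.2) s) = 2 ^ n := by
    have e1 : ∀ i s, ∑ k : (Fin aB → Bool) × (Fin aC → Bool),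
      Complex.normSq (KA i (Fin.append k.1 k.2) s) = ∑ k, Complex.normSq (KA i k s) := by
      intro i s
      exact Fintype.sum_equiv (Fin.appendEquiv aB aC) _ _ (fun k => rfl)
    simp only [e1]
    have h := congrArg (fun M => (Matrix.trace M).re) hKA
    simp only [Matrix.trace_one, Matrix.trace_sum, Complex.re_sum] at h
    simp only [Matrix.trace, Matrix.diag, Matrix.mul_apply, Matrix.conjTranspose_apply,
      Complex.re_sum] at h
    simp only [Fintype.card_fun, Fintype.card_bool, Fintype.card_fin] at h
    rw [show ((2 ^ n : ℕ) : ℂ) = (((2:ℝ) ^ n : ℝ) : ℂ) by push_cast; rfl, Complex.ofReal_re] at h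
    rw [← h]
    refine Finset.sum_congr rfl fun i _ => Finset.sum_congr rfl fun s _ =>
      Finset.sum_congr rfl fun k _ => ?_
    simp [Complex.normSq_apply]
  have key : ∀ i, _ := fun i => moe_matrix
    (fun (θ x : Fin n → Bool) => effect (fun p b => KB p x (Fin.append θ b)))
    (fun (θ x : Fin n → Bool) => effect (fun p b => KC p x (Fin.append b θ)))
    (fun _ _ => effect_psd _) (fun _ _ => effect_psd _)
    (fun θ => effect_sum KB hKB _ (inj1 θ)) (fun θ => effect_sum KC hKC _ (inj2 θ))
    rW (fun θ θ' => ∏ i, dAmp (θ i) (θ' i)) rW_complete rW_overlap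
    (fun θ θ' => Finset.prod_nonneg fun i _ => by unfold dAmp; split_ifs <;> positivity)
    (fun s k => KA i (Fin.append k.1 k.2) s) (Real.sqrt (2 + Real.sqrt 2) ^ n) (by positivity)
    dAmp_sum
  have h := Finset.sum_le_sum fun i (_ : i ∈ Finset.univ) => key i
  rw [← Finset.mul_sum, hN] at h
  refine le_trans (le_of_eq ?_) h
  rw [Finset.sum_comm (s := (Finset.univ : Finset (Fin mA)))]
  refine Finset.sum_congr rfl fun θ _ => ?_
  rw [Finset.sum_comm (s := (Finset.univ : Finset (Fin mA)))]
  refine Finset.sum_congr rfl fun x _ => ?_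
  rw [moeProb_eq, Finset.sum_comm]
  refine Finset.sum_congr rfl fun i _ => ?_
  rw [effect_form]

noncomputable def moeRate : ℝ := Real.sqrt (2 + Real.sqrt 2) / 2

theorem moeRate_lt : moeRate < 1 := by
  unfold moeRate
  rw [div_lt_one (by norm_num), Real.sqrt_lt' (by norm_num)]
  have : Real.sqrt 2 < 2 := by rw [Real.sqrt_lt' (by norm_num)]; norm_num
  linarith

theorem moeRate_nonneg : 0 ≤ moeRate := by unfold moeRate; positivity

/-- the derandomized monogamy-of-entanglement lemma: for any
countable family of triples of channels `(A t, B t, C t)` (given by Kraus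
families, with size functions `b t` and `c t`), there is a single fixed sequence
of Wiesner states `|x_lam^{θ_lam}⟩` such that every member of the family wins the
monogamy game on this fixed sequence with only negligible probability. -/
theorem derandomized_moe (b c mA mB mC : ℕ → ℕ → ℕ)
    (KA : ∀ t lam : ℕ,
      Fin (mA t lam) → Matrix (Fin (b t lam + c t lam) → Bool) (Fin lam → Bool) ℂ)
    (KB : ∀ t lam : ℕ,
      Fin (mB t lam) → Matrix (Fin lam → Bool) (Fin (lam + b t lam) → Bool) ℂ)
    (KC : ∀ t lam : ℕ,
      Fin (mC t lam) → Matrix (Fin lam → Bool) (Fin (c t lam + lam) → Bool) ℂ)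
    (hKA : ∀ t lam, ∑ i, (KA t lam i)ᴴ * KA t lam i = 1)
    (hKB : ∀ t lam, ∑ i, (KB t lam i)ᴴ * KB t lam i = 1)
    (hKC : ∀ t lam, ∑ i, (KC t lam i)ᴴ * KC t lam i = 1) :
    ∃ x θ : ∀ lam : ℕ, Fin lam → Bool, ∀ t : ℕ,
      Negligible (fun lam => moeProb (KA t lam) (KB t lam) (KC t lam) (x lam) (θ lam)) := by
  have hex : ∀ lam : ℕ, ∃ z : (Fin lam → Bool) × (Fin lam → Bool),
      ∑ t ∈ Finset.range (lam + 1), moeProb (KA t lam) (KB t lam) (KC t lam) z.2 z.1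
        ≤ ((lam : ℝ) + 1) * moeRate ^ lam := by
    intro lam
    by_contra hcon
    push Not at hcon
    have h1 := Finset.sum_lt_sum_of_nonempty
      (Finset.univ_nonempty (α := (Fin lam → Bool) × (Fin lam → Bool))) fun z _ => hcon z
    rw [Finset.sum_comm] at h1
    have h2 : ∀ t ∈ Finset.range (lam + 1), ∑ z : (Fin lam → Bool) × (Fin lam → Bool),
        moeProb (KA t lam) (KB t lam) (KC t lam) z.2 z.1
        ≤ Real.sqrt (2 + Real.sqrt 2) ^ lam * 2 ^ lam := by
      intro t _
      rw [Fintype.sum_prod_type]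
      exact moeProb_sum _ _ _ (hKA t lam) (hKB t lam) (hKC t lam)
    have h3 := h1.trans_le (Finset.sum_le_sum h2)
    simp only [Finset.sum_const, Finset.card_univ, Finset.card_range, Fintype.card_prod,
      Fintype.card_fun, Fintype.card_bool, Fintype.card_fin, nsmul_eq_mul, moeRate, div_pow] at h3
    push_cast at h3
    have h4 : (2 : ℝ) ^ lam ≠ 0 := by positivity
    apply lt_irrefl _ (lt_of_eq_of_lt _ h3)
    field_simp
  choose z hz using hex
  refine ⟨fun lam => (z lam).2, fun lam => (z lam).1, fun t c => ?_⟩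
  have hlim : Filter.Tendsto (fun n : ℕ => ((n : ℝ) ^ (c + 1) * moeRate ^ n) + (n : ℝ) ^ c * moeRate ^ n)
      Filter.atTop (nhds (0 + 0)) :=
    (tendsto_pow_const_mul_const_pow_of_lt_one _ moeRate_nonneg moeRate_lt).add
      (tendsto_pow_const_mul_const_pow_of_lt_one _ moeRate_nonneg moeRate_lt)
  rw [add_zero] at hlim
  obtain ⟨N, hN⟩ := Filter.eventually_atTop.1 (hlim.eventually_lt_const one_pos)
  refine ⟨max N (t + 1), fun n hn => ?_⟩
  have hn1 : N ≤ n := le_trans (le_max_left _ _) hn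
  have hn2 : t + 1 ≤ n := le_trans (le_max_right _ _) hn
  have hpos : (0 : ℝ) < n := by exact_mod_cast (by omega : 0 < n)
  rw [le_div_iff₀ (by positivity)]
  have h1 : moeProb (KA t n) (KB t n) (KC t n) (z n).2 (z n).1 ≤ ((n : ℝ) + 1) * moeRate ^ n :=
    le_trans (Finset.single_le_sum
      (f := fun t => moeProb (KA t n) (KB t n) (KC t n) (z n).2 (z n).1)
      (fun t _ => moeProb_nonneg _ _ _ _ _) (Finset.mem_range.2 (by omega))) (hz n)
  calc _ ≤ (((n : ℝ) + 1) * moeRate ^ n) * (n : ℝ) ^ c :=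
        mul_le_mul_of_nonneg_right h1 (by positivity)
    _ = ((n : ℝ) ^ (c + 1) * moeRate ^ n) + (n : ℝ) ^ c * moeRate ^ n := by ring
    _ ≤ 1 := (hN n hn1).le
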